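/- arXiv:2012.00844 — 2 statements merged into one kernel-verified Lean document; each statement's English description precedes it below -/
import Mathlib

section
/- Under these hypotheses: (i) η is ∇̸-horizontal, i.e. v(η(v₁,v₂)) = η(∇̸_v v₁, v₂) + η(v₁, ∇̸_v v₂) for all v, v₁, v₂ ∈ D; (ii) the multiplication is self-adjoint with respect to η, i.e. η(v*v₁, v₂) = η(v₁, v*v₂) for all v, v₁, v₂ ∈ D; (iii) if in addition there are E ∈ D and a map N : D → D with ∇_{z∂z}(∇_vζ) = −z⁻¹·∇_{E*v}ζ + ∇_{N(v)}ζ for all v ∈ D, then η(N(v₁), v₂) + η(v₁, N(v₂)) = (n−2)·η(v₁, v₂) for all v₁, v₂ ∈ D. -/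
noncomputable section

variable {A : Type*} [CommRing A] [Algebra ℂ A]

/-- The coefficientwise action of a derivation `v` of `A` on the Laurent series ring
`A((z))`. -/
def derivAct (v : Derivation ℂ A A) (P : LaurentSeries A) : LaurentSeries A where
  coeff n := v (P.coeff n)
  isPWO_support' := P.isPWO_support.mono (by
    intro n hn
    rw [Function.mem_support] at hn
    rw [HahnSeries.mem_support]
    intro h
    rw [h, map_zero] at hn
    exact hn rfl)

/-- The derivation `z∂z = z·d/dz` acting coefficientwise on `A((z))`: `zⁿ ↦ n·zⁿ`. -/
def zDz (P : LaurentSeries A) : LaurentSeries A where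
  coeff n := (n : ℤ) • P.coeff n
  isPWO_support' := P.isPWO_support.mono (by
    intro n hn
    rw [Function.mem_support] at hn
    rw [HahnSeries.mem_support]
    intro h
    rw [h, smul_zero] at hn
    exact hn rfl)

/-- The involution `σ : A((z)) → A((z))`, `P(z) ↦ P(−z)`. -/
def sigmaInv (P : LaurentSeries A) : LaurentSeries A where
  coeff n := ((((-1 : ℤˣ) ^ n : ℤˣ) : ℤ)) • P.coeff n
  isPWO_support' := P.isPWO_support.mono (by
    intro n hn
    rw [Function.mem_support] at hn
    rw [HahnSeries.mem_support]
    intro h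
    rw [h, smul_zero] at hn
    exact hn rfl)

theorem sigmaInv_zinv :
    sigmaInv (HahnSeries.single (-1 : ℤ) (1 : A) : LaurentSeries A)
      = -HahnSeries.single (-1 : ℤ) (1 : A) := by
  ext k
  show ((((-1 : ℤˣ) ^ k : ℤˣ) : ℤ)) • (HahnSeries.single (-1 : ℤ) (1 : A)).coeff k = _
  rw [HahnSeries.coeff_neg]
  by_cases h : k = -1
  · subst h
    simp
  · rw [HahnSeries.coeff_single_of_ne h]
    simp

theorem sigmaInv_neg_zinv :
    sigmaInv (-HahnSeries.single (-1 : ℤ) (1 : A) : LaurentSeries A)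
      = HahnSeries.single (-1 : ℤ) (1 : A) := by
  ext k
  show ((((-1 : ℤˣ) ^ k : ℤˣ) : ℤ)) • (-HahnSeries.single (-1 : ℤ) (1 : A)).coeff k = _
  rw [HahnSeries.coeff_neg]
  by_cases h : k = -1
  · subst h
    simp
  · rw [HahnSeries.coeff_single_of_ne h]
    simp

/-- Let `M` be an `A((z))`-module with covariant derivatives
`∇_v` (`v ∈ D`) and `∇_{z∂z}`, a higher-residue pairing `K` compatible with them,
`ζ ∈ M`, `η` an `A`-bilinear form on `D = Derivation ℂ A A`, satisfying the purity
`K(∇_vζ, ∇_wζ) = η(v,w)·zⁿ⁻²` and the flat-structure expansion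
`∇_{v₁}∇_{v₂}ζ = z⁻¹∇_{v₁*v₂}ζ + ∇_{∇̸_{v₁}v₂}ζ`.  Then (i) `η` is `∇̸`-horizontal;
(ii) `*` is self-adjoint for `η`; (iii) if moreover
`∇_{z∂z}∇_vζ = −z⁻¹∇_{E*v}ζ + ∇_{N(v)}ζ`, then `η(N v₁, v₂) + η(v₁, N v₂) = (n−2)·η(v₁,v₂)`. -/
theorem metric_flat_structure
    (M : Type*) [AddCommGroup M] [Module (LaurentSeries A) M] (n : ℤ)
    -- the connection `∇̸` on `D`
    (nablaS : Derivation ℂ A A → Derivation ℂ A A → Derivation ℂ A A)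
    (hnablaS_addl : ∀ v v' w, nablaS (v + v') w = nablaS v w + nablaS v' w)
    (hnablaS_smull : ∀ (a : A) (v w), nablaS (a • v) w = a • nablaS v w)
    (hnablaS_addr : ∀ v w w', nablaS v (w + w') = nablaS v w + nablaS v w')
    (hnablaS_leib : ∀ (v) (a : A) (w), nablaS v (a • w) = v a • w + a • nablaS v w)
    -- the `A`-bilinear multiplication `*` on `D`
    (mul : Derivation ℂ A A → Derivation ℂ A A → Derivation ℂ A A)
    (hmul_addl : ∀ u v w, mul (u + v) w = mul u w + mul v w)
    (hmul_smull : ∀ (a : A) (u w), mul (a • u) w = a • mul u w)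
    (hmul_addr : ∀ u v w, mul u (v + w) = mul u v + mul u w)
    (hmul_smulr : ∀ (a : A) (u w), mul u (a • w) = a • mul u w)
    -- the covariant derivatives on `M`
    (nablaV : Derivation ℂ A A → M → M)
    (hnablaV_add : ∀ v m m', nablaV v (m + m') = nablaV v m + nablaV v m')
    (hnablaV_leib : ∀ v (P : LaurentSeries A) (m : M),
      nablaV v (P • m) = derivAct v P • m + P • nablaV v m)
    (nablaZ : M → M)
    (hnablaZ_add : ∀ m m', nablaZ (m + m') = nablaZ m + nablaZ m')
    (hnablaZ_leib : ∀ (P : LaurentSeries A) (m : M),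
      nablaZ (P • m) = zDz P • m + P • nablaZ m)
    -- the higher residue pairing `K`
    (K : M → M → LaurentSeries A)
    (hK_addl : ∀ m m' w, K (m + m') w = K m w + K m' w)
    (hK_addr : ∀ w m m', K w (m + m') = K w m + K w m')
    (hK_Pl : ∀ (P : LaurentSeries A) (m w : M), K (P • m) w = P * K m w)
    (hK_Pr : ∀ (P : LaurentSeries A) (m w : M), K w (P • m) = sigmaInv P * K w m)
    (hK_v : ∀ (v : Derivation ℂ A A) (m m' : M),
      derivAct v (K m m') = K (nablaV v m) m' + K m (nablaV v m'))
    (hK_z : ∀ m m' : M,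
      zDz (K m m') = K (nablaZ m) m' + K m (nablaZ m'))
    -- the distinguished element and the metric
    (zeta : M) (eta : Derivation ℂ A A → Derivation ℂ A A → A)
    (heta_addl : ∀ u u' w, eta (u + u') w = eta u w + eta u' w)
    (heta_smull : ∀ (a : A) (u w), eta (a • u) w = a * eta u w)
    (heta_addr : ∀ w u u', eta w (u + u') = eta w u + eta w u')
    (heta_smulr : ∀ (a : A) (u w), eta w (a • u) = a * eta w u)
    -- purity of the pairing on first covariant derivatives of `ζ`
    (hpure : ∀ v w : Derivation ℂ A A,
      K (nablaV v zeta) (nablaV w zeta) = HahnSeries.single (n - 2) (eta v w))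
    -- the flat-structure expansion
    (hflat : ∀ v₁ v₂ : Derivation ℂ A A,
      nablaV v₁ (nablaV v₂ zeta)
        = (HahnSeries.single (-1 : ℤ) (1 : A) : LaurentSeries A) • nablaV (mul v₁ v₂) zeta
          + nablaV (nablaS v₁ v₂) zeta) :
    -- (i) horizontality of η
    (∀ v v₁ v₂ : Derivation ℂ A A,
      v (eta v₁ v₂) = eta (nablaS v v₁) v₂ + eta v₁ (nablaS v v₂)) ∧
    -- (ii) self-adjointness of the multiplication
    (∀ v v₁ v₂ : Derivation ℂ A A,
      eta (mul v v₁) v₂ = eta v₁ (mul v v₂)) ∧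
    -- (iii) duality of the exponents
    (∀ (E : Derivation ℂ A A) (N : Derivation ℂ A A → Derivation ℂ A A),
      (∀ v : Derivation ℂ A A,
        nablaZ (nablaV v zeta)
          = -((HahnSeries.single (-1 : ℤ) (1 : A) : LaurentSeries A)
                • nablaV (mul E v) zeta)
            + nablaV (N v) zeta) →
      ∀ v₁ v₂ : Derivation ℂ A A,
        eta (N v₁) v₂ + eta v₁ (N v₂) = (n - 2) • eta v₁ v₂) := by
  have key : ∀ v v₁ v₂ : Derivation ℂ A A,
      derivAct v (HahnSeries.single (n - 2) (eta v₁ v₂))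
        = HahnSeries.single (-1 + (n - 2)) (eta (mul v v₁) v₂)
          + HahnSeries.single (n - 2) (eta (nablaS v v₁) v₂)
          + (-HahnSeries.single (-1 + (n - 2)) (eta v₁ (mul v v₂))
          + HahnSeries.single (n - 2) (eta v₁ (nablaS v v₂))) := by
    intro v v₁ v₂
    rw [← hpure, hK_v, hflat, hflat, hK_addl, hK_addr, hK_Pl, hK_Pr, sigmaInv_zinv,
      hpure, hpure, hpure, hpure, neg_mul, HahnSeries.single_mul_single,
      HahnSeries.single_mul_single, one_mul, one_mul]
  have hne : n - 2 ≠ -1 + (n - 2) := by omega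
  have hne' : -1 + (n - 2) ≠ n - 2 := by omega
  refine ⟨?_, ?_, ?_⟩
  · intro v v₁ v₂
    have h := congrArg (fun P => HahnSeries.coeff P (n - 2)) (key v v₁ v₂)
    change v ((HahnSeries.single (n - 2) (eta v₁ v₂)).coeff (n - 2)) = _ at h
    simpa only [HahnSeries.coeff_add, HahnSeries.coeff_neg, HahnSeries.coeff_single_same,
      HahnSeries.coeff_single_of_ne hne, zero_add, neg_zero] using h
  · intro v v₁ v₂
    have h := congrArg (fun P => HahnSeries.coeff P (-1 + (n - 2))) (key v v₁ v₂)
    change v ((HahnSeries.single (n - 2) (eta v₁ v₂)).coeff (-1 + (n - 2))) = _ at h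
    simp only [HahnSeries.coeff_add, HahnSeries.coeff_neg, HahnSeries.coeff_single_same,
      HahnSeries.coeff_single_of_ne hne', add_zero, map_zero] at h
    exact (add_neg_eq_zero.mp h.symm)
  · intro E N hN v₁ v₂
    have key2 : zDz (HahnSeries.single (n - 2) (eta v₁ v₂))
        = -HahnSeries.single (-1 + (n - 2)) (eta (mul E v₁) v₂)
          + HahnSeries.single (n - 2) (eta (N v₁) v₂)
          + (HahnSeries.single (-1 + (n - 2)) (eta v₁ (mul E v₂))
          + HahnSeries.single (n - 2) (eta v₁ (N v₂))) := by
      rw [← hpure, hK_z, hN, hN, ← neg_smul, ← neg_smul, hK_addl, hK_addr, hK_Pl, hK_Pr,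
        sigmaInv_neg_zinv,
        hpure, hpure, hpure, hpure, neg_mul, HahnSeries.single_mul_single,
        HahnSeries.single_mul_single, one_mul, one_mul]
    have h := congrArg (fun P => HahnSeries.coeff P (n - 2)) key2
    change (n - 2) • ((HahnSeries.single (n - 2) (eta v₁ v₂)).coeff (n - 2)) = _ at h
    simp only [HahnSeries.coeff_add, HahnSeries.coeff_neg, HahnSeries.coeff_single_same,
      HahnSeries.coeff_single_of_ne hne, zero_add, neg_zero] at h
    exact h.symm

end
end

section
/- Under these hypotheses the multiplication is self-adjoint with respect to η: η(v*v₁, v₂) = η(v₁, v*v₂) for all v, v₁, v₂ ∈ D, even though η need not be ∇̸-horizontal. -/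
noncomputable section

variable {A : Type*} [CommRing A] [Algebra ℂ A]

/-- Let `M` be an `A((z))`-module with covariant derivatives `∇_v`
(`v ∈ D = Derivation ℂ A A`), a pairing `K` compatible with them, `ζ ∈ M`, `η` an
`A`-bilinear form on `D`, satisfying the weak purity
`K(∇_vζ, ∇_wζ) − η(v,w)·zⁿ⁻² ∈ zⁿ⁻¹·A[[z]]` and the flat-structure expansion
`∇_{v₁}∇_{v₂}ζ = z⁻¹∇_{v₁*v₂}ζ + ∇_{∇̸_{v₁}v₂}ζ`.  Then the multiplication is
self-adjoint with respect to `η`: `η(v*v₁, v₂) = η(v₁, v*v₂)`. -/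
theorem self_adjoint_without_purity
    (M : Type*) [AddCommGroup M] [Module (LaurentSeries A) M] (n : ℤ)
    -- the connection `∇̸` on `D`
    (nablaS : Derivation ℂ A A → Derivation ℂ A A → Derivation ℂ A A)
    (hnablaS_addl : ∀ v v' w, nablaS (v + v') w = nablaS v w + nablaS v' w)
    (hnablaS_smull : ∀ (a : A) (v w), nablaS (a • v) w = a • nablaS v w)
    (hnablaS_addr : ∀ v w w', nablaS v (w + w') = nablaS v w + nablaS v w')
    (hnablaS_leib : ∀ (v) (a : A) (w), nablaS v (a • w) = v a • w + a • nablaS v w)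
    -- the `A`-bilinear multiplication `*` on `D`
    (mul : Derivation ℂ A A → Derivation ℂ A A → Derivation ℂ A A)
    (hmul_addl : ∀ u v w, mul (u + v) w = mul u w + mul v w)
    (hmul_smull : ∀ (a : A) (u w), mul (a • u) w = a • mul u w)
    (hmul_addr : ∀ u v w, mul u (v + w) = mul u v + mul u w)
    (hmul_smulr : ∀ (a : A) (u w), mul u (a • w) = a • mul u w)
    -- the covariant derivatives on `M`
    (nablaV : Derivation ℂ A A → M → M)
    (hnablaV_add : ∀ v m m', nablaV v (m + m') = nablaV v m + nablaV v m')
    (hnablaV_leib : ∀ v (P : LaurentSeries A) (m : M),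
      nablaV v (P • m) = derivAct v P • m + P • nablaV v m)
    -- the pairing `K`
    (K : M → M → LaurentSeries A)
    (hK_addl : ∀ m m' w, K (m + m') w = K m w + K m' w)
    (hK_addr : ∀ w m m', K w (m + m') = K w m + K w m')
    (hK_Pl : ∀ (P : LaurentSeries A) (m w : M), K (P • m) w = P * K m w)
    (hK_Pr : ∀ (P : LaurentSeries A) (m w : M), K w (P • m) = sigmaInv P * K w m)
    (hK_v : ∀ (v : Derivation ℂ A A) (m m' : M),
      derivAct v (K m m') = K (nablaV v m) m' + K m (nablaV v m'))
    -- the distinguished element and the bilinear form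
    (zeta : M) (eta : Derivation ℂ A A → Derivation ℂ A A → A)
    (heta_addl : ∀ u u' w, eta (u + u') w = eta u w + eta u' w)
    (heta_smull : ∀ (a : A) (u w), eta (a • u) w = a * eta u w)
    (heta_addr : ∀ w u u', eta w (u + u') = eta w u + eta w u')
    (heta_smulr : ∀ (a : A) (u w), eta w (a • u) = a * eta w u)
    -- weak purity: `K(∇_vζ, ∇_wζ) − η(v,w)zⁿ⁻²` has vanishing coefficients
    -- in all degrees `< n − 1`
    (hweakpure : ∀ v w : Derivation ℂ A A, ∀ j : ℤ, j < n - 1 →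
      (K (nablaV v zeta) (nablaV w zeta)
        - HahnSeries.single (n - 2) (eta v w)).coeff j = 0)
    -- the flat-structure expansion
    (hflat : ∀ v₁ v₂ : Derivation ℂ A A,
      nablaV v₁ (nablaV v₂ zeta)
        = (HahnSeries.single (-1 : ℤ) (1 : A) : LaurentSeries A) • nablaV (mul v₁ v₂) zeta
          + nablaV (nablaS v₁ v₂) zeta) :
    ∀ v v₁ v₂ : Derivation ℂ A A, eta (mul v v₁) v₂ = eta v₁ (mul v v₂) := by
  intro v v₁ v₂
  have hc : ∀ u w : Derivation ℂ A A, ∀ j : ℤ, j < n - 1 →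
      (K (nablaV u zeta) (nablaV w zeta)).coeff j
        = (HahnSeries.single (n - 2) (eta u w)).coeff j := by
    intro u w j hj
    have h := hweakpure u w j hj
    rw [HahnSeries.coeff_sub] at h
    exact sub_eq_zero.mp h
  have h0 : ∀ u w : Derivation ℂ A A,
      (K (nablaV u zeta) (nablaV w zeta)).coeff (n - 3) = 0 := by
    intro u w
    rw [hc u w _ (by omega), HahnSeries.coeff_single_of_ne (by omega)]
  have h2 : ∀ u w : Derivation ℂ A A,
      (K (nablaV u zeta) (nablaV w zeta)).coeff (n - 2) = eta u w := by
    intro u w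
    rw [hc u w _ (by omega), HahnSeries.coeff_single_same]
  have hs : sigmaInv (HahnSeries.single (-1 : ℤ) (1 : A) : LaurentSeries A)
      = HahnSeries.single (-1 : ℤ) (-1 : A) := by
    ext j
    by_cases hj : j = -1
    · subst hj
      simp [sigmaInv]
    · simp [sigmaInv, HahnSeries.coeff_single_of_ne hj]
  have hm : ∀ (a : A) (P : LaurentSeries A),
      ((HahnSeries.single (-1 : ℤ) a : LaurentSeries A) * P).coeff (n - 3)
        = a * P.coeff (n - 2) := by
    intro a P
    have := HahnSeries.coeff_single_mul_add (r := a) (x := P) (a := n - 2) (b := (-1 : ℤ))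
    rwa [show n - 2 + -1 = n - 3 by ring] at this
  have key := congrArg (fun P : LaurentSeries A => P.coeff (n - 3))
    (hK_v v (nablaV v₁ zeta) (nablaV v₂ zeta))
  have hd : (derivAct v (K (nablaV v₁ zeta) (nablaV v₂ zeta))).coeff (n - 3) = 0 := by
    change v _ = 0
    rw [h0, map_zero]
  simp only [hd, hflat, hK_addl, hK_addr, hK_Pl, hK_Pr, hs, HahnSeries.coeff_add, hm, h0, h2] at key
  linear_combination -key

end
end
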